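/- Let p, q be nonzero coprime integers and α, β ∈ ℝ. Then ∫₀¹ Φ(p·t − α, q·t − β) dt = (8/(π² p q)) · Σ_{k=1}^{∞} sin(πkp/2)·sin(πkq/2)·cos(2πk(pβ − qα)) / k², where Φ(u,v) = sgn(cos(2πu)·cos(2πv)) and the series converges absolutely. -/

import Mathlib

open Filter Real MeasureTheory

noncomputable def sgn (t : ℝ) : ℝ := if 0 < t then 1 else if t < 0 then -1 else 0

noncomputable def Φ (u v : ℝ) : ℝ := sgn (Real.cos (2 * π * u) * Real.cos (2 * π * v))

/-!
Since `Φ u v = s u * s v` for the square wave `s u = sgn (cos (2 π u))`, the integral is the inner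
product, on the circle, of `s (p t - α)` and `s (q t - β)`. The frequencies of these two functions
are multiples of `p` and of `q` respectively, so by coprimality Parseval's identity only sees the
frequencies `p q k`, where their Fourier coefficients are those of `s` at `q k` and at `p k` up to
the phases coming from `α` and `β`. Pairing `k` with `-k` turns the phases into cosines.
-/

open AddCircle Measure
open scoped ComplexConjugate

section Monomials

variable {T : ℝ}

theorem fourier_add_apply (n : ℤ) (x y : AddCircle T) :
    fourier n (x + y) = fourier n x * fourier n y := by
  simp only [fourier_apply, smul_add, toCircle_add, Circle.coe_mul]

theorem fourier_zsmul (m n : ℤ) (x : AddCircle T) : fourier m (n • x) = fourier (n * m) x := by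
  simp only [fourier_apply, smul_smul, mul_comm]

theorem integral_fourier_symm (n : ℤ) (r : ℝ) :
    ∫ t in -r..r, fourier n (t : AddCircle T) = ((2 * r * sinc (2 * π * n * r / T) : ℝ) : ℂ) := by
  set ω : ℝ := 2 * π * n / T with hω
  have hfourier (t : ℝ) : fourier n (t : AddCircle T) = Complex.exp ((ω * t : ℝ) * Complex.I) := by
    rw [fourier_coe_apply, hω]
    push_cast
    ring_nf
  rw [show 2 * π * n * r / T = ω * r by ring]
  simp_rw [hfourier]
  rcases eq_or_ne ω 0 with h0 | h0
  · simp [h0, two_mul]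
  · have h0' : (ω : ℂ) ≠ 0 := mod_cast h0
    rw [intervalIntegral.integral_comp_mul_left (fun t : ℝ => Complex.exp (t * Complex.I)) h0,
      mul_neg, integral_exp_mul_I_eq_sinc, Complex.real_smul]
    push_cast
    field_simp

theorem hasSum_cos_of_hasSum_fourier {c : ℤ → ℝ} (hc : Function.Even c) {x s : ℝ}
    (h : HasSum (fun k : ℤ => fourier k (x : AddCircle T) * (c k : ℂ)) s) :
    HasSum (fun k : ℕ => 2 * (c (k + 1) * Real.cos (2 * π * (k + 1) * x / T))) (s - c 0) := by
  have hpair (k : ℤ) : fourier k (x : AddCircle T) * (c k : ℂ) +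
      fourier (-k) (x : AddCircle T) * (c (-k) : ℂ) =
        ((2 * (c k * Real.cos (2 * π * k * x / T)) : ℝ) : ℂ) := by
    rw [hc, fourier_coe_apply, fourier_coe_apply]
    push_cast
    rw [Complex.cos]
    ring_nf
  have hfold := (hasSum_nat_add_iff' 1).mpr h.nat_add_neg
  simp only [hpair, Finset.sum_range_one] at hfold
  rw [← Complex.hasSum_ofReal]
  convert! hfold using 1
  · simp
  · rw [fourier_zero]
    push_cast
    simp only [mul_zero, zero_mul, zero_div, Complex.cos_zero]
    ring

end Monomials

section FourierCoeff

variable {T : ℝ} [hT : Fact (0 < T)] {E : Type*} [NormedAddCommGroup E]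

theorem memLp_comp_zsmul_sub {f : AddCircle T → E} {r : ENNReal} (hf : MemLp f r haarAddCircle)
    {p : ℤ} (hp : p ≠ 0) (a : AddCircle T) :
    MemLp (fun x => f (p • x - a)) r haarAddCircle :=
  hf.comp_measurePreserving
    ((measurePreserving_sub_right haarAddCircle a).comp (measurePreserving_zsmul haarAddCircle hp))

variable [NormedSpace ℂ E]

theorem fourierCoeff_comp_sub (f : AddCircle T → E) (a : AddCircle T) (n : ℤ) :
    fourierCoeff (fun x => f (x - a)) n = fourier (-n) a • fourierCoeff f n := by
  have shift (x : AddCircle T) :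
      fourier (-n) x • f (x - a) = fourier (-n) a • fourier (-n) (x - a) • f (x - a) := by
    rw [smul_smul, ← fourier_add_apply, add_sub_cancel]
  simp_rw [fourierCoeff, shift, integral_smul]
  rw [integral_sub_right_eq_self (fun x => fourier (-n) x • f x)]

theorem fourierCoeff_eq_zero_of_periodic {f : AddCircle T → E} {u : AddCircle T} {n : ℤ}
    (hf : Function.Periodic f u) (hu : fourier n u ≠ 1) : fourierCoeff f n = 0 := by
  have hinv : fourierCoeff f n = fourier n u • fourierCoeff f n := by
    conv_lhs => rw [← funext hf]
    simpa only [sub_neg_eq_add, fourier_apply, smul_neg, neg_smul, neg_neg]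
      using fourierCoeff_comp_sub f (-u) n
  by_contra h
  exact hu (smul_left_injective ℂ h (by simpa only [one_smul] using hinv.symm))

theorem fourierCoeff_comp_zsmul_mul {f : AddCircle T → E}
    (hf : AEStronglyMeasurable f haarAddCircle) {p : ℤ} (hp : p ≠ 0) (m : ℤ) :
    fourierCoeff (fun x => f (p • x)) (p * m) = fourierCoeff f m := by
  have hmap := (measurePreserving_zsmul (haarAddCircle (T := T)) hp).map_eq
  have hmeas : AEStronglyMeasurable (fun x => fourier (-m) x • f x) (haarAddCircle (T := T)) :=
    (map_continuous (fourier (-m))).aestronglyMeasurable.smul hf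
  calc fourierCoeff (fun x => f (p • x)) (p * m)
      = ∫ x, fourier (-m) (p • x) • f (p • x) ∂haarAddCircle := by
        simp only [fourierCoeff, fourier_zsmul, mul_neg]
    _ = ∫ x, fourier (-m) x • f x ∂(haarAddCircle.map fun x => p • x) :=
        (integral_map (continuous_zsmul p).aemeasurable (by rwa [hmap])).symm
    _ = fourierCoeff f m := by rw [hmap, fourierCoeff]

theorem fourierCoeff_comp_zsmul_sub_mul {f : AddCircle T → E}
    (hf : AEStronglyMeasurable f haarAddCircle) {p : ℤ} (hp : p ≠ 0) (a : AddCircle T) (m : ℤ) :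
    fourierCoeff (fun x => f (p • x - a)) (p * m) = fourier (-m) a • fourierCoeff f m := by
  rw [← fourierCoeff_comp_sub]
  exact fourierCoeff_comp_zsmul_mul
    (hf.comp_measurePreserving (measurePreserving_sub_right haarAddCircle a)) hp m

theorem fourierCoeff_comp_zsmul_eq_zero (f : AddCircle T → E) {p n : ℤ} (hp : p ≠ 0)
    (hn : ¬p ∣ n) : fourierCoeff (fun x => f (p • x)) n = 0 := by
  have hp' : (p : ℝ) ≠ 0 := mod_cast hp
  refine fourierCoeff_eq_zero_of_periodic (u := ((T / p : ℝ) : AddCircle T)) (fun x => ?_) ?_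
  · rw [smul_add, ← coe_zsmul, zsmul_eq_mul, mul_div_cancel₀ _ hp', coe_period, add_zero]
  · rw [fourier_coe_apply, Ne, Complex.exp_eq_one_iff]
    rintro ⟨k, hk⟩
    have hT' : (T : ℂ) ≠ 0 := mod_cast hT.out.ne'
    have hpc : (p : ℂ) ≠ 0 := mod_cast hp
    have hnk : (n : ℂ) = p * k := by
      push_cast at hk
      field_simp at hk
      linear_combination hk
    exact hn ⟨k, mod_cast hnk⟩

theorem hasSum_conj_fourierCoeff_mul {f g : AddCircle T → ℂ}
    (hf : MemLp f 2 haarAddCircle) (hg : MemLp g 2 haarAddCircle) :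
    HasSum (fun n : ℤ => conj (fourierCoeff f n) * fourierCoeff g n)
      (∫ x, conj (f x) * g x ∂haarAddCircle) := by
  have h := fourierBasis.hasSum_inner_mul_inner hf.toLp hg.toLp
  simp_rw [← inner_conj_symm hf.toLp (fourierBasis _), ← HilbertBasis.repr_apply_apply,
    fourierBasis_repr, fourierCoeff_congr_ae hf.coeFn_toLp,
    fourierCoeff_congr_ae hg.coeFn_toLp] at h
  rw [L2.inner_def] at h
  convert! h using 1
  refine integral_congr_ae ?_
  filter_upwards [hf.coeFn_toLp, hg.coeFn_toLp] with x hfx hgx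
  rw [hfx, hgx, RCLike.inner_apply']

theorem hasSum_integral_conj_comp_zsmul_mul_comp_zsmul {f g : AddCircle T → ℂ}
    (hf : MemLp f 2 haarAddCircle) (hg : MemLp g 2 haarAddCircle) {p q : ℤ} (hp : p ≠ 0)
    (hq : q ≠ 0) (hpq : IsCoprime p q) (a b : AddCircle T) :
    HasSum (fun k : ℤ => fourier k (q • a - p • b) *
        (conj (fourierCoeff f (q * k)) * fourierCoeff g (p * k)))
      (∫ x, conj (f (p • x - a)) * g (q • x - b) ∂haarAddCircle) := by
  have parseval := hasSum_conj_fourierCoeff_mul (memLp_comp_zsmul_sub hf hp a)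
    (memLp_comp_zsmul_sub hg hq b)
  have hinj : Function.Injective fun k : ℤ => p * q * k :=
    mul_right_injective₀ (mul_ne_zero hp hq)
  rw [← hinj.hasSum_iff] at parseval
  · refine parseval.congr_fun fun k => ?_
    have phase : fourier k (q • a - p • b) = fourier (q * k) a * fourier (-(p * k)) b := by
      rw [sub_eq_add_neg, fourier_add_apply, ← neg_smul, fourier_zsmul, fourier_zsmul, neg_mul]
    have coeff_f := fourierCoeff_comp_zsmul_sub_mul hf.1 hp a (q * k)
    have coeff_g := fourierCoeff_comp_zsmul_sub_mul hg.1 hq b (p * k)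
    rw [← mul_assoc] at coeff_f
    rw [← mul_assoc, mul_comm q p] at coeff_g
    rw [Function.comp_apply, coeff_f, coeff_g, phase, smul_eq_mul, smul_eq_mul, map_mul,
      ← fourier_neg, neg_neg, mul_mul_mul_comm]
  · intro n hn
    by_cases hpn : p ∣ n
    · have hqn : ¬q ∣ n := fun hqn => hn ((hpq.mul_dvd hpn hqn).imp fun _ => Eq.symm)
      rw [fourierCoeff_comp_zsmul_eq_zero (fun x => g (x - b)) hq hqn, mul_zero]
    · rw [fourierCoeff_comp_zsmul_eq_zero (fun x => f (x - a)) hp hpn, map_zero, zero_mul]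

end FourierCoeff

section SquareWave

theorem sgn_eq_coe_sign (t : ℝ) : sgn t = SignType.sign t := by
  rw [sgn, sign_apply]
  split_ifs <;> simp

theorem sgn_mul (s t : ℝ) : sgn (s * t) = sgn s * sgn t := by
  simp only [sgn_eq_coe_sign, sign_mul, SignType.coe_mul]

theorem abs_sgn_le_one (t : ℝ) : |sgn t| ≤ 1 := by
  unfold sgn
  split_ifs <;> simp

theorem measurable_sgn : Measurable sgn :=
  .ite measurableSet_Ioi measurable_const (.ite measurableSet_Iio measurable_const measurable_const)

/-- The square wave `t ↦ sgn (cos (2 π t))` as a function on the circle `ℝ / ℤ`; it is complex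
valued so that Mathlib's Fourier coefficients apply to it. -/
noncomputable def squareWave (x : UnitAddCircle) : ℂ := (sgn (toCircle x : ℂ).re : ℝ)

theorem squareWave_coe (t : ℝ) : squareWave t = (sgn (Real.cos (2 * π * t)) : ℝ) := by
  rw [squareWave, toCircle_apply_mk, Circle.coe_exp, Complex.exp_ofReal_mul_I_re, div_one]

theorem ofReal_Φ (u v : ℝ) : (Φ u v : ℂ) = conj (squareWave u) * squareWave v := by
  rw [Φ, sgn_mul, squareWave_coe, squareWave_coe, Complex.conj_ofReal, Complex.ofReal_mul]

theorem memLp_squareWave (r : ENNReal) : MemLp squareWave r haarAddCircle := by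
  have hmeas : Measurable squareWave := Complex.measurable_ofReal.comp (measurable_sgn.comp
    (Complex.measurable_re.comp (continuous_subtype_val.comp continuous_toCircle).measurable))
  refine MemLp.of_bound hmeas.aestronglyMeasurable 1 (ae_of_all _ fun x => ?_)
  simpa only [squareWave, Complex.norm_real, norm_eq_abs] using abs_sgn_le_one _

theorem squareWave_coe_eq_one {t : ℝ} (ht : t ∈ Set.Ioo (-(1 / 4) : ℝ) (1 / 4)) :
    squareWave t = 1 := by
  have hcos : 0 < Real.cos (2 * π * t) := Real.cos_pos_of_mem_Ioo
    ⟨by nlinarith [ht.1, pi_pos], by nlinarith [ht.2, pi_pos]⟩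
  rw [squareWave_coe, sgn, if_pos hcos, Complex.ofReal_one]

theorem squareWave_coe_eq_neg_one {t : ℝ} (ht : t ∈ Set.Ioo (1 / 4 : ℝ) (3 / 4)) :
    squareWave t = -1 := by
  have hcos : Real.cos (2 * π * t) < 0 := Real.cos_neg_of_pi_div_two_lt_of_lt
    (by nlinarith [ht.1, pi_pos]) (by nlinarith [ht.2, pi_pos])
  rw [squareWave_coe, sgn, if_neg hcos.not_gt, if_pos hcos, Complex.ofReal_neg, Complex.ofReal_one]

theorem fourierCoeff_squareWave_eq_integral_sub_integral (n : ℤ) :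
    fourierCoeff squareWave n =
      (∫ t in -(1 / 4 : ℝ)..1 / 4, fourier (-n) (t : UnitAddCircle)) -
        ∫ t in (1 / 4 : ℝ)..3 / 4, fourier (-n) (t : UnitAddCircle) := by
  have hpos : Set.EqOn (fun t : ℝ => fourier (-n) (t : UnitAddCircle))
      (fun t : ℝ => fourier (-n) (t : UnitAddCircle) • squareWave t)
      (Set.Ioo (-(1 / 4)) (1 / 4)) := fun t ht => by
    simp only [squareWave_coe_eq_one ht, smul_eq_mul, mul_one]
  have hneg : Set.EqOn (fun t : ℝ => -fourier (-n) (t : UnitAddCircle))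
      (fun t : ℝ => fourier (-n) (t : UnitAddCircle) • squareWave t)
      (Set.Ioo (1 / 4) (3 / 4)) := fun t ht => by
    simp only [squareWave_coe_eq_neg_one ht, smul_eq_mul, mul_neg, mul_one]
  have hcont : Continuous fun t : ℝ => fourier (-n) (t : UnitAddCircle) := by fun_prop
  have hle : (-(1 / 4) : ℝ) ≤ 1 / 4 := by norm_num
  have hle' : (1 / 4 : ℝ) ≤ 3 / 4 := by norm_num
  rw [fourierCoeff_eq_intervalIntegral _ n (-(1 / 4)), div_one, one_smul,
    show -(1 / 4) + 1 = (3 / 4 : ℝ) by norm_num,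
    ← intervalIntegral.integral_add_adjacent_intervals
      ((hcont.intervalIntegrable _ _).congr_uIoo (by rwa [Set.uIoo_of_le hle]))
      ((hcont.neg.intervalIntegrable _ _).congr_uIoo (by rwa [Set.uIoo_of_le hle'])),
    ← intervalIntegral.integral_congr_Ioo_of_le hle hpos,
    ← intervalIntegral.integral_congr_Ioo_of_le hle' hneg,
    intervalIntegral.integral_neg, sub_eq_add_neg]

/-- At `n = 0` the right-hand side is `0 / 0 = 0`, the mean of the square wave. -/
theorem fourierCoeff_squareWave (n : ℤ) :
    fourierCoeff squareWave n = ((2 * Real.sin (π * n / 2) / (π * n) : ℝ) : ℂ) := by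
  have hint (a b : ℝ) : IntervalIntegrable (fun t : ℝ => fourier (-n) (t : UnitAddCircle))
      volume a b :=
    Continuous.intervalIntegrable (by fun_prop) _ _
  have htotal : ∫ t in -(1 / 4 : ℝ)..3 / 4, fourier (-n) (t : UnitAddCircle) =
      if n = 0 then 1 else 0 := by
    have h := fourierCoeff_eq_intervalIntegral (fourier (T := 1) 0) n (-(1 / 4))
    rw [fourierCoeff_fourier, Pi.single_apply, div_one, one_smul,
      show -(1 / 4) + 1 = (3 / 4 : ℝ) by norm_num] at h
    simpa only [fourier_zero, smul_eq_mul, mul_one] using h.symm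
  have hsplit := intervalIntegral.integral_add_adjacent_intervals
    (hint (-(1 / 4)) (1 / 4)) (hint (1 / 4) (3 / 4))
  rw [fourierCoeff_squareWave_eq_integral_sub_integral, eq_sub_of_add_eq' hsplit, htotal,
    integral_fourier_symm]
  rcases eq_or_ne n 0 with rfl | hn
  · norm_num
  · have hn' : (n : ℝ) ≠ 0 := mod_cast hn
    have hω : 2 * π * ((-n : ℤ) : ℝ) * (1 / 4) / 1 = -(π * n / 2) := by push_cast; ring
    rw [if_neg hn, zero_sub, sub_neg_eq_add, hω, sinc_neg,
      sinc_of_ne_zero (div_ne_zero (mul_ne_zero pi_ne_zero hn') two_ne_zero)]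
    push_cast
    field_simp
    ring

theorem integral_Φ_eq_integral_squareWave (p q : ℤ) (α β : ℝ) :
    ((∫ t in (0 : ℝ)..1, Φ (p * t - α) (q * t - β) : ℝ) : ℂ) =
      ∫ x : UnitAddCircle, conj (squareWave (p • x - (α : UnitAddCircle))) *
        squareWave (q • x - (β : UnitAddCircle)) ∂haarAddCircle := by
  rw [integral_haarAddCircle, inv_one, one_smul, ← UnitAddCircle.intervalIntegral_preimage 0,
    zero_add, ← intervalIntegral.integral_ofReal]
  simp only [ofReal_Φ, coe_sub, ← zsmul_eq_mul, coe_zsmul]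

theorem hasSum_integral_Φ {p q : ℤ} (hp : p ≠ 0) (hq : q ≠ 0) (hpq : IsCoprime p q) (α β : ℝ) :
    HasSum (fun k : ℕ => 8 / (π ^ 2 * p * q) *
        (Real.sin (π * (k + 1) * p / 2) * Real.sin (π * (k + 1) * q / 2) *
          Real.cos (2 * π * (k + 1) * (p * β - q * α)) / (k + 1) ^ 2))
      (∫ t in (0 : ℝ)..1, Φ (p * t - α) (q * t - β)) := by
  let c (k : ℤ) : ℝ := 4 / (π ^ 2 * p * q) *
    (Real.sin (π * k * p / 2) * Real.sin (π * k * q / 2) / k ^ 2)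
  have hc : Function.Even c := fun k => by
    simp [c, neg_div, Real.sin_neg]
  have coeff (k : ℤ) : conj (fourierCoeff squareWave (q * k)) * fourierCoeff squareWave (p * k) =
      (c k : ℂ) := by
    rw [fourierCoeff_squareWave, fourierCoeff_squareWave, Complex.conj_ofReal,
      ← Complex.ofReal_mul, Complex.ofReal_inj]
    simp only [c]
    push_cast
    rw [show π * (q * k) / 2 = π * k * q / 2 by ring, show π * (p * k) / 2 = π * k * p / 2 by ring]
    ring
  have h := hasSum_integral_conj_comp_zsmul_mul_comp_zsmul (memLp_squareWave 2)
    (memLp_squareWave 2) hp hq hpq (α : UnitAddCircle) (β : UnitAddCircle)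
  simp only [coeff, ← integral_Φ_eq_integral_squareWave, ← coe_zsmul, ← coe_sub] at h
  have hfold := hasSum_cos_of_hasSum_fourier hc h
  have hc0 : c 0 = 0 := by simp [c]
  rw [hc0, sub_zero] at hfold
  refine hfold.congr_fun fun k => ?_
  have hphase : 2 * π * (k + 1) * (p * β - q * α) =
      -(2 * π * (k + 1) * (q • α - p • β) / 1) := by
    simp only [zsmul_eq_mul]
    ring
  rw [hphase, Real.cos_neg]
  simp only [c]
  push_cast
  ring

end SquareWave

theorem period_integral_fourier_series
    (p q : ℤ) (hp : p ≠ 0) (hq : q ≠ 0) (hcop : IsCoprime p q) (α β : ℝ) :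
    Summable (fun k : ℕ =>
      |Real.sin (π * ((k : ℝ) + 1) * (p : ℝ) / 2) * Real.sin (π * ((k : ℝ) + 1) * (q : ℝ) / 2) *
        Real.cos (2 * π * ((k : ℝ) + 1) * ((p : ℝ) * β - (q : ℝ) * α)) / ((k : ℝ) + 1) ^ 2|) ∧
    (∫ t in (0:ℝ)..1, Φ ((p : ℝ) * t - α) ((q : ℝ) * t - β)) =
      (8 / (π ^ 2 * (p : ℝ) * (q : ℝ))) *
        ∑' k : ℕ,
          Real.sin (π * ((k : ℝ) + 1) * (p : ℝ) / 2) * Real.sin (π * ((k : ℝ) + 1) * (q : ℝ) / 2) *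
            Real.cos (2 * π * ((k : ℝ) + 1) * ((p : ℝ) * β - (q : ℝ) * α)) / ((k : ℝ) + 1) ^ 2 := by
  have h := hasSum_integral_Φ hp hq hcop α β
  have hpq : π ^ 2 * (p : ℝ) * (q : ℝ) ≠ 0 :=
    mul_ne_zero (mul_ne_zero (pow_ne_zero 2 pi_ne_zero) (mod_cast hp)) (mod_cast hq)
  have hc : 8 / (π ^ 2 * (p : ℝ) * (q : ℝ)) ≠ 0 := div_ne_zero (by norm_num) hpq
  exact ⟨((summable_mul_left_iff hc).mp h.summable).abs, by rw [← tsum_mul_left, h.tsum_eq]⟩
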